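/- arXiv:1608.08746 — 2 statements merged into one kernel-verified Lean document; each statement's English description precedes it below -/
import Mathlib

section
/- Let A = (m_{i,j}) be an n×r matrix of nonnegative integers, let b_1,…,b_r be complex numbers, and for j = 1,…,r define p_j = x_1^{m_{1,j}} ⋯ x_n^{m_{n,j}} − b_j in ℂ[x_1,…,x_n]. Let 1 ≤ i_1 < ⋯ < i_r ≤ n be a choice of r row indices and set M_i = Σ_{j=1}^r m_{i,j} for each i. Then the following identity of polynomials holds: (∏_{ℓ=1}^r x_{i_ℓ}) · det((∂p_j/∂x_{i_ℓ})_{ℓ,j}) = det((m_{i_ℓ,j})_{ℓ,j}) · ∏_{i=1}^n x_i^{M_i}. -/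
open MvPolynomial

/-!
Every monomial is an eigenvector of each Euler operator `x_i ∂/∂x_i`, with eigenvalue the exponent
of `x_i`, and subtracting a constant does not change derivatives. So multiplying row `ℓ` of the
Jacobian matrix by `x_{i_ℓ}` gives the matrix obtained from the exponent matrix by multiplying
column `j` by the `j`-th monomial. Taking determinants, the row factors come out on one side and
the monomials, whose product is `∏_i x_i ^ M_i`, on the other.
-/

section Determinant

variable {ι R : Type*} [Fintype ι] [DecidableEq ι] [CommRing R]

theorem prod_mul_det_eq_det_mul_prod {A B : Matrix ι ι R} {v w : ι → R}
    (h : ∀ i j, v i * A i j = B i j * w j) :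
    (∏ i, v i) * A.det = B.det * ∏ j, w j := by
  calc (∏ i, v i) * A.det
      = (Matrix.of fun i j => v i * A i j).det := (Matrix.det_mul_column v A).symm
    _ = (Matrix.of fun i j => w j * B i j).det := by simp only [h, mul_comm]
    _ = B.det * ∏ j, w j := by rw [Matrix.det_mul_row, mul_comm]

end Determinant

section Monomials

variable {σ ι R : Type*} [Fintype σ]

theorem prod_prod_pow_eq_prod_pow_sum [Fintype ι] [CommMonoid R] (x : σ → R) (m : σ → ι → ℕ) :
    ∏ j, ∏ i, x i ^ m i j = ∏ i, x i ^ ∑ j, m i j := by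
  rw [Finset.prod_comm]
  simp only [Finset.prod_pow_eq_pow_sum]

theorem prod_univ_X_pow_eq_monomial [CommSemiring R] (e : σ → ℕ) :
    (∏ i, X i ^ e i : MvPolynomial σ R) = monomial (Finsupp.equivFunOnFinite.symm e) 1 := by
  rw [monomial_eq, Finsupp.prod_fintype _ _ fun _ => pow_zero _, C_1, one_mul]
  rfl

theorem X_mul_pderiv_prod_X_pow [CommSemiring R] (e : σ → ℕ) (k : σ) :
    (X k : MvPolynomial σ R) * pderiv k (∏ i, X i ^ e i) = C (e k : R) * ∏ i, X i ^ e i := by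
  rw [prod_univ_X_pow_eq_monomial, X_mul_pderiv_monomial, nsmul_eq_mul, map_natCast]
  rfl

theorem X_mul_pderiv_prod_X_pow_sub_C [CommRing R] (e : σ → ℕ) (c : R) (k : σ) :
    X k * pderiv k ((∏ i, X i ^ e i) - C c) = C (e k : R) * ∏ i, X i ^ e i := by
  rw [map_sub, pderiv_C, sub_zero, X_mul_pderiv_prod_X_pow]

end Monomials

theorem stmt8_general {σ ι R : Type*} [Fintype σ] [Fintype ι] [DecidableEq ι] [CommRing R]
    (m : σ → ι → ℕ) (b : ι → R) (p : ι → MvPolynomial σ R)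
    (hp : ∀ j, p j = (∏ i, X i ^ m i j) - C (b j)) (idx : ι → σ)
    (M : σ → ℕ) (hM : ∀ i, M i = ∑ j, m i j) :
    (∏ ℓ, X (idx ℓ)) * Matrix.det (Matrix.of fun ℓ j => pderiv (idx ℓ) (p j)) =
      C (Matrix.det (Matrix.of fun ℓ j => (m (idx ℓ) j : R))) * ∏ i, X i ^ M i := by
  simp only [hM]
  rw [← prod_prod_pow_eq_prod_pow_sum, RingHom.map_det]
  refine prod_mul_det_eq_det_mul_prod fun ℓ j => ?_
  rw [Matrix.of_apply, hp]
  exact X_mul_pderiv_prod_X_pow_sub_C (fun i => m i j) (b j) (idx ℓ)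

/-- The Jacobian determinant identity: for `p_j = x_1^{m_{1,j}} ⋯ x_n^{m_{n,j}} − b_j` and row
indices `i_1 < ⋯ < i_r`, with `M_i = ∑_j m_{i,j}`, one has
`(∏_ℓ x_{i_ℓ}) · det(∂p_j/∂x_{i_ℓ}) = det((m_{i_ℓ,j})) · ∏_i x_i^{M_i}`. -/
theorem stmt8 {n r : ℕ} (m : Fin n → Fin r → ℕ) (b : Fin r → ℂ)
    (p : Fin r → MvPolynomial (Fin n) ℂ)
    (hp : ∀ j, p j = (∏ i, X i ^ m i j) - C (b j))
    (idx : Fin r → Fin n) (hidx : StrictMono idx)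
    (M : Fin n → ℕ) (hM : ∀ i, M i = ∑ j, m i j) :
    (∏ ℓ, X (idx ℓ)) * Matrix.det (Matrix.of fun ℓ j => pderiv (idx ℓ) (p j)) =
      C (Matrix.det (Matrix.of fun ℓ j => ((m (idx ℓ) j : ℂ)))) * ∏ i, X i ^ M i :=
  stmt8_general m b p hp idx M hM
end

section
/- Let Δ be a smooth fan in ℝ^n with respect to the lattice ℤ^n and let Ξ ⊂ Hom(ℤ^n, ℤ) be a finite set. Then there exists a fan Δ̄ obtained from Δ by a finite sequence of elementary stellar subdivisions of two-dimensional cones such that: (1) Δ̄ is a smooth fan; (2) Δ̄ is a subdivision of Δ, i.e. every cone of Δ̄ is contained in some cone of Δ and the union of the cones of Δ̄ equals the union of the cones of Δ; (3) every χ ∈ Ξ has property (E) with respect to every cone of Δ̄, i.e. for every cone C of Δ̄ either ⟨χ, v⟩ ≥ 0 for all v ∈ C or ⟨χ, v⟩ ≤ 0 for all v ∈ C. -/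
/-- The canonical embedding of `ℤ^n` into `ℝ^n`. -/
noncomputable def toR {n : ℕ} (x : Fin n → ℤ) : Fin n → ℝ := fun i => (x i : ℝ)

/-- The cone of nonnegative real linear combinations of the finite set `s` of integer
vectors. -/
noncomputable def coneOf {n : ℕ} (s : Finset (Fin n → ℤ)) : Set (Fin n → ℝ) :=
  {v | ∃ c : (Fin n → ℤ) → ℝ, (∀ x, 0 ≤ c x) ∧ v = ∑ x ∈ s, c x • toR x}

/-- A smooth fan in `ℝ^n` with respect to the lattice `ℤ^n`. -/
def IsSmoothFan {n : ℕ} (Δ : Finset (Finset (Fin n → ℤ))) : Prop :=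
  (∀ s ∈ Δ, LinearIndependent ℝ (fun x : s => toR (x : Fin n → ℤ))) ∧
  (∀ s ∈ Δ, ∃ P : Submodule ℤ (Fin n → ℤ),
      IsCompl (Submodule.span ℤ (s : Set (Fin n → ℤ))) P) ∧
  (∀ s ∈ Δ, ∀ t ⊆ s, t ∈ Δ) ∧
  (∀ s ∈ Δ, ∀ t ∈ Δ,
      (∃ u ⊆ s, coneOf s ∩ coneOf t = coneOf u) ∧
      (∃ u ⊆ t, coneOf s ∩ coneOf t = coneOf u))

/-- The elementary stellar subdivision `_CΔ` of `Δ` along the two dimensional cone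
`C = C(e^1, e^2)`: every cone `C(e^1, e^2, w^1, …, w^t)` containing `C` is replaced by the two
cones `C(e^1, e^1+e^2, w^1, …, w^t)` and `C(e^1+e^2, e^2, w^1, …, w^t)`, and all faces of
these new cones are adjoined. -/
def stellar {n : ℕ} (Δ : Finset (Finset (Fin n → ℤ))) (e1 e2 : Fin n → ℤ) :
    Finset (Finset (Fin n → ℤ)) :=
  Δ.filter (fun s => ¬ ({e1, e2} : Finset (Fin n → ℤ)) ⊆ s) ∪
    (Δ.filter (fun s => ({e1, e2} : Finset (Fin n → ℤ)) ⊆ s)).biUnion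
      (fun s => (insert (e1 + e2) (s.erase e2)).powerset ∪
        (insert (e1 + e2) (s.erase e1)).powerset)

/-- One elementary stellar subdivision step: `Δ'` is obtained from `Δ` by subdividing along a
two dimensional cone `C(e^1, e^2)` of `Δ`. -/
def StellarStep {n : ℕ} (Δ Δ' : Finset (Finset (Fin n → ℤ))) : Prop :=
  ∃ e1 e2 : Fin n → ℤ, e1 ≠ e2 ∧ ({e1, e2} : Finset (Fin n → ℤ)) ∈ Δ ∧
    Δ' = stellar Δ e1 e2

/-!
A simplicial collection of cones with primitive generators is a fan exactly when every vector of
its support is, in only one way, a positive combination of the generators of a single cone. Under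
the stellar subdivision along `C(e₁, e₂)`, these combinations correspond bijectively to the old ones
by substituting `e₁ + e₂` for the new generator, without changing the vector they represent. Hence
smoothness and support persist.

To reach property (E) for a given `χ`, subdivide a cone `C(x, y)` with `χ(x) > 0 > χ(y)` for which
`χ(x) - χ(y)` is maximal. Every new two-dimensional cone on which `χ` changes sign has a strictly
smaller difference, so finitely many steps lower the maximum and eventually no sign change is left.
Property (E) passes to subdivisions, so the members of `Ξ` can be treated one after the other.
-/

open scoped NNReal

section LinearAlgebra

variable {ι M : Type*}

theorem linearIndependent_nnreal_iff [AddCommGroup M] [Module ℝ M] {v : ι → M} :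
    LinearIndependent ℝ≥0 v ↔ LinearIndependent ℝ v := by
  refine ⟨fun hv => linearIndependent_iff.2 fun c hc => ?_,
    fun hv => hv.restrict_scalars fun a b hab => by simpa [NNReal.smul_def] using hab⟩
  let pos : ι →₀ ℝ≥0 := c.mapRange Real.toNNReal Real.toNNReal_zero
  let neg : ι →₀ ℝ≥0 := (-c).mapRange Real.toNNReal Real.toNNReal_zero
  let toReal : (ι →₀ ℝ≥0) → ι →₀ ℝ := Finsupp.mapRange (↑) NNReal.coe_zero
  have hcoe : ∀ d, Finsupp.linearCombination ℝ v (toReal d) =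
      Finsupp.linearCombination ℝ≥0 v d := fun d => by
    simp [toReal, Finsupp.linearCombination_apply, Finsupp.sum_mapRange_index, NNReal.smul_def]
  have hc_eq : c = toReal pos - toReal neg := by
    ext i
    simp [pos, neg, toReal]
  have hpos_eq_neg : pos = neg := hv <| by
    rwa [hc_eq, map_sub, hcoe, hcoe, sub_eq_zero] at hc
  rw [hc_eq, hpos_eq_neg, sub_self]

theorem isComplemented_span_of_subset {R : Type*} [Ring R] [AddCommGroup M] [Module R M]
    {s t : Set M} (hs : LinearIndepOn R id s) (hsc : IsComplemented (Submodule.span R s))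
    (hts : t ⊆ s) : IsComplemented (Submodule.span R t) := by
  obtain ⟨P, hP⟩ := hsc
  have hdisj : Disjoint (Submodule.span R t) (Submodule.span R (s \ t)) := by
    rw [← Set.union_sdiff_cancel hts, linearIndepOn_union_iff Set.disjoint_sdiff_right] at hs
    simpa using hs.2.2
  rw [← Set.union_sdiff_cancel hts, Submodule.span_union] at hP
  exact ⟨_, hdisj.isCompl_sup_right_of_isCompl_sup_left hP⟩

theorem span_insert_add_erase {R : Type*} [Ring R] [AddCommGroup M] [Module R M]
    [DecidableEq M] {x y : M} {s : Finset M} (hne : x ≠ y) (hx : x ∈ s) (hy : y ∈ s) :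
    Submodule.span R ((insert (x + y) (s.erase y) : Finset M) : Set M) =
      Submodule.span R (s : Set M) := by
  apply le_antisymm <;> rw [Submodule.span_le]
  · intro z hz
    rcases Finset.mem_insert.1 hz with rfl | hz
    · exact Submodule.add_mem _ (Submodule.subset_span hx) (Submodule.subset_span hy)
    · exact Submodule.subset_span (Finset.mem_of_mem_erase hz)
  · intro z hz
    rcases eq_or_ne z y with rfl | hzy
    · have hsum : x + z ∈ Submodule.span R (insert (x + z) (s.erase z) : Finset M) :=
        Submodule.subset_span (Finset.mem_insert_self _ _)
      have hxmem : x ∈ Submodule.span R (insert (x + z) (s.erase z) : Finset M) :=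
        Submodule.subset_span (Finset.mem_insert_of_mem (Finset.mem_erase.2 ⟨hne, hx⟩))
      simpa using Submodule.sub_mem _ hsum hxmem
    · exact Submodule.subset_span (Finset.mem_insert_of_mem (Finset.mem_erase.2 ⟨hzy, hz⟩))

theorem exists_dual_apply_eq_one {R : Type*} [Ring R] [IsDomain R] [AddCommGroup M] [Module R M]
    [Module.IsTorsionFree R M] {x : M} (hx : x ≠ 0)
    (hxc : IsComplemented (Submodule.span R {x})) : ∃ φ : M →ₗ[R] R, φ x = 1 := by
  obtain ⟨P, hP⟩ := hxc
  refine ⟨(LinearEquiv.coord R M x hx).toLinearMap ∘ₗ Submodule.projectionOnto _ P hP, ?_⟩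
  rw [LinearMap.comp_apply,
    Submodule.projectionOnto_apply_of_mem_left hP (Submodule.mem_span_singleton_self x)]
  exact LinearEquiv.coord_self R M x hx

theorem eq_of_smul_eq_smul_of_isComplemented_span [AddCommGroup M] [Module.IsTorsionFree ℤ M]
    {x y : M} (hxc : IsComplemented (Submodule.span ℤ {x}))
    (hyc : IsComplemented (Submodule.span ℤ {y})) {p q : ℤ} (hpq : 0 < p * q)
    (h : p • y = q • x) (hx : x ≠ 0) : x = y := by
  have hp : p ≠ 0 := left_ne_zero_of_mul hpq.ne'
  have hq : q ≠ 0 := right_ne_zero_of_mul hpq.ne'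
  have hy : y ≠ 0 := by
    rintro rfl
    exact smul_ne_zero hq hx (h.symm.trans (smul_zero p))
  obtain ⟨φ, hφ⟩ := exists_dual_apply_eq_one hx hxc
  obtain ⟨ψ, hψ⟩ := exists_dual_apply_eq_one hy hyc
  have hφh : p * φ y = q := by simpa [hφ] using congrArg φ h
  have hψh : p = q * ψ x := by simpa [hψ] using congrArg ψ h
  have hunit : φ y * ψ x = 1 := mul_left_cancel₀ hp <| by
    rw [← mul_assoc, hφh, ← hψh, mul_one]
  have hp_eq_q : p = q := by
    rcases Int.eq_one_or_neg_one_of_mul_eq_one hunit with hone | hone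
    · rw [← hφh, hone, mul_one]
    · rw [← hφh, hone] at hpq
      linarith [mul_self_nonneg p]
  exact (smul_right_injective M hq (hp_eq_q ▸ h)).symm

-- Expanding `v i` through `B` and back through `A` must give the trivial expansion, and no
-- cancellation is possible, so some generator in `B` involves `v i` alone.
theorem exists_smul_eq_of_span_image_eq {R : Type*} [Semiring R] [PartialOrder R]
    [CanonicallyOrderedAdd R] [NoZeroDivisors R] [Nontrivial R] [AddCommMonoid M] [Module R M]
    {v : ι → M} {A B : Set ι} (hA : LinearIndepOn R v A)
    (h : Submodule.span R (v '' A) = Submodule.span R (v '' B)) {i : ι} (hi : i ∈ A) :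
    ∃ j ∈ B, ∃ a : R, a ≠ 0 ∧ v j = a • v i := by
  obtain ⟨c, hcB, hc⟩ := (Finsupp.mem_span_image_iff_linearCombination R).1
    (h ▸ Submodule.subset_span (Set.mem_image_of_mem v hi))
  have hB : ∀ j ∈ B, ∃ d ∈ Finsupp.supported R R A, Finsupp.linearCombination R v d = v j :=
    fun j hj => (Finsupp.mem_span_image_iff_linearCombination R).1
      (h ▸ Submodule.subset_span (Set.mem_image_of_mem v hj))
  choose! d hdA hd using hB
  have hexpand : Finsupp.single i 1 = ∑ j ∈ c.support, c j • d j := by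
    refine linearIndepOn_iffₛ.1 hA _ (Finsupp.single_mem_supported R 1 hi) _
      (Submodule.sum_mem _ fun j hj => Submodule.smul_mem _ _ (hdA j (hcB hj))) ?_
    rw [Finsupp.linearCombination_single, one_smul, map_sum, ← hc,
      Finsupp.linearCombination_apply, Finsupp.sum]
    exact Finset.sum_congr rfl fun j hj => by rw [map_smul, hd j (hcB hj)]
  have hcoeff (k : ι) : Finsupp.single i (1 : R) k = ∑ j ∈ c.support, c j * d j k := by
    simpa [Finsupp.finsetSum_apply] using DFunLike.congr_fun hexpand k
  obtain ⟨j, hj, hji⟩ : ∃ j ∈ c.support, c j * d j i ≠ 0 :=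
    Finset.exists_ne_zero_of_sum_ne_zero (by simp [← hcoeff i])
  have hd_single : d j = Finsupp.single i (d j i) := by
    refine (Finsupp.support_subset_singleton).1 fun k hk => ?_
    by_contra hki
    have hsum := hcoeff k
    rw [Finsupp.single_eq_of_ne (by simpa using hki), eq_comm, Finset.sum_eq_zero_iff] at hsum
    exact mul_ne_zero (left_ne_zero_of_mul hji) (Finsupp.mem_support_iff.1 hk) (hsum j hj)
  refine ⟨j, hcB hj, d j i, right_ne_zero_of_mul hji, ?_⟩
  rw [← hd j (hcB hj), hd_single, Finsupp.linearCombination_single, Finsupp.single_eq_same]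

end LinearAlgebra

section Cones

variable {n : ℕ} {s t : Finset (Fin n → ℤ)}

theorem toR_add (x y : Fin n → ℤ) : toR (x + y) = toR x + toR y :=
  funext fun _ => Int.cast_add _ _

theorem toR_zero : toR (0 : Fin n → ℤ) = 0 :=
  funext fun _ => Int.cast_zero

theorem toR_dotProduct_toR (χ x : Fin n → ℤ) : toR χ ⬝ᵥ toR x = ((χ ⬝ᵥ x : ℤ) : ℝ) := by
  simp [dotProduct, toR]

theorem linearIndepOn_int_of_linearIndepOn_toR {s : Set (Fin n → ℤ)}
    (h : LinearIndepOn ℝ toR s) : LinearIndepOn ℤ id s := by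
  have hint : LinearIndepOn ℤ toR s :=
    LinearIndependent.restrict_scalars (R := ℤ) (fun a b hab => by simpa using hab) h
  exact LinearIndependent.of_comp ((Int.castAddHom ℝ).compLeft (Fin n)).toIntLinearMap hint

theorem eq_of_toR_eq_smul {x y : Fin n → ℤ} (hxc : IsComplemented (Submodule.span ℤ {x}))
    (hyc : IsComplemented (Submodule.span ℤ {y})) (hx : x ≠ 0) {a : ℝ} (ha : 0 < a)
    (h : toR y = a • toR x) : x = y := by
  obtain ⟨i, hi : x i ≠ 0⟩ := Function.ne_iff.1 hx
  have hcoord (j : Fin n) : (y j : ℝ) = a * x j := congrFun h j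
  refine eq_of_smul_eq_smul_of_isComplemented_span hxc hyc (p := x i) (q := y i) ?_ ?_ hx
  · have hpos : (0 : ℝ) < x i * y i := by
      rw [hcoord, mul_left_comm]
      exact mul_pos ha (mul_self_pos.2 (by exact_mod_cast hi))
    exact_mod_cast hpos
  · ext j
    have hcross : (x i : ℝ) * y j = y i * x j := by
      rw [hcoord, hcoord]
      ring
    exact_mod_cast hcross

/-- The real vector represented by a formal combination of lattice vectors with nonnegative
coefficients. -/
noncomputable def realize : ((Fin n → ℤ) →₀ ℝ≥0) →ₗ[ℝ≥0] (Fin n → ℝ) :=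
  Finsupp.linearCombination ℝ≥0 toR

theorem realize_single (x : Fin n → ℤ) (a : ℝ≥0) :
    realize (Finsupp.single x a) = a • toR x :=
  Finsupp.linearCombination_single ℝ≥0 a x

theorem coneOf_eq_span (s : Finset (Fin n → ℤ)) :
    coneOf s = Submodule.span ℝ≥0 (toR '' (s : Set (Fin n → ℤ))) := by
  ext v
  rw [SetLike.mem_coe, Submodule.mem_span_image_finset_iff_exists_fun']
  constructor
  · rintro ⟨c, hc, rfl⟩
    exact ⟨fun x => ⟨c x, hc x⟩, rfl⟩
  · rintro ⟨c, rfl⟩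
    exact ⟨fun x => c x, fun x => (c x).coe_nonneg, rfl⟩

theorem mem_coneOf {v : Fin n → ℝ} :
    v ∈ coneOf s ↔ ∃ c : (Fin n → ℤ) →₀ ℝ≥0, c.support ⊆ s ∧ realize c = v := by
  rw [coneOf_eq_span, SetLike.mem_coe, Finsupp.mem_span_image_iff_linearCombination]
  simp [Finsupp.mem_supported, realize]

theorem realize_mem_coneOf {c : (Fin n → ℤ) →₀ ℝ≥0} (hc : c.support ⊆ s) :
    realize c ∈ coneOf s :=
  mem_coneOf.2 ⟨c, hc, rfl⟩

theorem toR_mem_coneOf {x : Fin n → ℤ} (hx : x ∈ s) : toR x ∈ coneOf s := by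
  rw [coneOf_eq_span]
  exact Submodule.subset_span (Set.mem_image_of_mem toR hx)

theorem coneOf_subset_coneOf (h : ∀ x ∈ s, toR x ∈ coneOf t) : coneOf s ⊆ coneOf t := by
  rw [coneOf_eq_span t] at h ⊢
  rw [coneOf_eq_span s, SetLike.coe_subset_coe, Submodule.span_le]
  rintro _ ⟨x, hx, rfl⟩
  exact h x hx

theorem linearIndepOn_toR_iff_injOn_realize :
    LinearIndepOn ℝ toR (s : Set (Fin n → ℤ)) ↔ Set.InjOn realize {c | c.support ⊆ s} := by
  rw [LinearIndepOn, ← linearIndependent_nnreal_iff, ← LinearIndepOn, linearIndepOn_iffₛ]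
  simp only [Finsupp.mem_supported, Finset.coe_subset]
  exact ⟨fun h c hc d hd => h c hc d hd, fun h c hc d hd => h hc hd⟩

theorem subset_of_coneOf_eq (hs : LinearIndepOn ℝ toR (s : Set (Fin n → ℤ)))
    (hsc : ∀ x ∈ s, IsComplemented (Submodule.span ℤ {x}))
    (htc : ∀ y ∈ t, IsComplemented (Submodule.span ℤ {y})) (h : coneOf s = coneOf t) :
    s ⊆ t := by
  intro x hx
  rw [coneOf_eq_span, coneOf_eq_span, SetLike.coe_set_eq] at h
  obtain ⟨y, hy, a, ha, hya⟩ := exists_smul_eq_of_span_image_eq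
    (linearIndependent_nnreal_iff.2 hs : LinearIndepOn ℝ≥0 toR _) h hx
  have hx0 : x ≠ 0 := fun hx0 => hs.ne_zero hx (hx0 ▸ toR_zero)
  rwa [eq_of_toR_eq_smul (hsc x hx) (htc y hy) hx0 (NNReal.coe_pos.2 ha.bot_lt) hya]

theorem dotProduct_nonneg_of_mem_coneOf {w v : Fin n → ℝ} (h : ∀ x ∈ s, 0 ≤ w ⬝ᵥ toR x)
    (hv : v ∈ coneOf s) : 0 ≤ w ⬝ᵥ v := by
  obtain ⟨c, hc, rfl⟩ := hv
  rw [dotProduct_sum]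
  refine Finset.sum_nonneg fun x hx => ?_
  rw [dotProduct_smul]
  exact mul_nonneg (hc x) (h x hx)

theorem dotProduct_nonpos_of_mem_coneOf {w v : Fin n → ℝ} (h : ∀ x ∈ s, w ⬝ᵥ toR x ≤ 0)
    (hv : v ∈ coneOf s) : w ⬝ᵥ v ≤ 0 := by
  have hneg := dotProduct_nonneg_of_mem_coneOf (w := -w) (by simpa using h) hv
  simpa using hneg

end Cones

section Fans

variable {n : ℕ} {Δ Δ' Δ'' : Finset (Finset (Fin n → ℤ))}

/-- The abstract complex of cones with the combinatorics of `Δ`: a point is a formal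
nonnegative combination of lattice vectors whose support is a member of `Δ`. The fan condition on
`Δ` amounts to the injectivity of `realize` on this set. -/
def coneComplex (Δ : Finset (Finset (Fin n → ℤ))) : Set ((Fin n → ℤ) →₀ ℝ≥0) :=
  {c | c.support ∈ Δ}

theorem biUnion_coneOf_eq_image_realize (hΔ : IsLowerSet (Δ : Set (Finset (Fin n → ℤ)))) :
    ⋃ s ∈ Δ, coneOf s = realize '' coneComplex Δ := by
  ext v
  simp only [Set.mem_iUnion, mem_coneOf, exists_prop]
  constructor
  · rintro ⟨s, hs, c, hcs, rfl⟩
    exact Set.mem_image_of_mem _ (hΔ hcs hs)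
  · rintro ⟨c, hc, rfl⟩
    exact ⟨c.support, hc, c, subset_rfl, rfl⟩

theorem linearIndepOn_toR_of_injOn_realize (hΔ : IsLowerSet (Δ : Set (Finset (Fin n → ℤ))))
    (hinj : Set.InjOn realize (coneComplex Δ)) {s : Finset (Fin n → ℤ)} (hs : s ∈ Δ) :
    LinearIndepOn ℝ toR (s : Set (Fin n → ℤ)) :=
  linearIndepOn_toR_iff_injOn_realize.2 (hinj.mono fun _ hc => hΔ hc hs)

theorem coneOf_inter_of_injOn_realize (hΔ : IsLowerSet (Δ : Set (Finset (Fin n → ℤ))))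
    (hinj : Set.InjOn realize (coneComplex Δ)) {s t : Finset (Fin n → ℤ)} (hs : s ∈ Δ)
    (ht : t ∈ Δ) : coneOf s ∩ coneOf t = coneOf (s ∩ t) := by
  refine subset_antisymm ?_ (Set.subset_inter ?_ ?_)
  · rintro v ⟨hvs, hvt⟩
    obtain ⟨c, hcs, rfl⟩ := mem_coneOf.1 hvs
    obtain ⟨d, hdt, hcd⟩ := mem_coneOf.1 hvt
    obtain rfl : d = c := hinj (hΔ hdt ht) (hΔ hcs hs) hcd
    exact realize_mem_coneOf (Finset.subset_inter hcs hdt)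
  · exact coneOf_subset_coneOf fun x hx => toR_mem_coneOf (Finset.mem_inter.1 hx).1
  · exact coneOf_subset_coneOf fun x hx => toR_mem_coneOf (Finset.mem_inter.1 hx).2

theorem IsSmoothFan.isLowerSet (h : IsSmoothFan Δ) :
    IsLowerSet (Δ : Set (Finset (Fin n → ℤ))) :=
  fun s t hts hs => h.2.2.1 s hs t hts

theorem IsSmoothFan.isComplemented_span (h : IsSmoothFan Δ) {s : Finset (Fin n → ℤ)}
    (hs : s ∈ Δ) : IsComplemented (Submodule.span ℤ (s : Set (Fin n → ℤ))) :=
  h.2.1 s hs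

theorem IsSmoothFan.isComplemented_span_singleton (h : IsSmoothFan Δ) {s : Finset (Fin n → ℤ)}
    (hs : s ∈ Δ) {x : Fin n → ℤ} (hx : x ∈ s) : IsComplemented (Submodule.span ℤ {x}) := by
  simpa using h.isComplemented_span (h.isLowerSet (Finset.singleton_subset_iff.2 hx) hs)

theorem IsSmoothFan.injOn_realize (h : IsSmoothFan Δ) : Set.InjOn realize (coneComplex Δ) := by
  intro c hc d hd hcd
  have hinj {s : Finset (Fin n → ℤ)} (hs : s ∈ Δ) : Set.InjOn realize {c | c.support ⊆ s} :=
    linearIndepOn_toR_iff_injOn_realize.1 (h.1 s hs)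
  obtain ⟨⟨u, huc, hu⟩, u', hud, hu'⟩ := h.2.2.2 _ hc _ hd
  have huΔ : u ∈ Δ := h.isLowerSet huc hc
  have hu'Δ : u' ∈ Δ := h.isLowerSet hud hd
  have huu' : u ⊆ u' := subset_of_coneOf_eq (h.1 u huΔ)
    (fun x hx => h.isComplemented_span_singleton huΔ hx)
    (fun y hy => h.isComplemented_span_singleton hu'Δ hy) (hu.symm.trans hu')
  have hmem : realize c ∈ coneOf u :=
    hu ▸ ⟨realize_mem_coneOf subset_rfl, hcd ▸ realize_mem_coneOf subset_rfl⟩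
  obtain ⟨w, hwu, hw⟩ := mem_coneOf.1 hmem
  have hwc : w = c := hinj hc (hwu.trans huc) (Finset.Subset.refl _) hw
  have hwd : w = d := hinj hd (hwu.trans (huu'.trans hud)) (Finset.Subset.refl _)
    (hw.trans hcd)
  exact hwc.symm.trans hwd

theorem isSmoothFan_of_injOn_realize (hΔ : IsLowerSet (Δ : Set (Finset (Fin n → ℤ))))
    (hcompl : ∀ s ∈ Δ, IsComplemented (Submodule.span ℤ (s : Set (Fin n → ℤ))))
    (hinj : Set.InjOn realize (coneComplex Δ)) : IsSmoothFan Δ := by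
  refine ⟨fun s hs => linearIndepOn_toR_of_injOn_realize hΔ hinj hs, hcompl,
    fun s hs t hts => hΔ hts hs, fun s hs t ht => ?_⟩
  have hinter := coneOf_inter_of_injOn_realize hΔ hinj hs ht
  exact ⟨⟨_, Finset.inter_subset_left, hinter⟩, ⟨_, Finset.inter_subset_right, hinter⟩⟩

/-- `Δ'` is a subdivision of `Δ`: its cones refine those of `Δ` and have the same union. -/
def IsSubdivision (Δ' Δ : Finset (Finset (Fin n → ℤ))) : Prop :=
  (∀ s ∈ Δ', ∃ t ∈ Δ, coneOf s ⊆ coneOf t) ∧ ⋃ s ∈ Δ', coneOf s = ⋃ s ∈ Δ, coneOf s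

theorem IsSubdivision.refl (Δ : Finset (Finset (Fin n → ℤ))) : IsSubdivision Δ Δ :=
  ⟨fun s hs => ⟨s, hs, subset_rfl⟩, rfl⟩

theorem IsSubdivision.trans (h : IsSubdivision Δ'' Δ') (h' : IsSubdivision Δ' Δ) :
    IsSubdivision Δ'' Δ := by
  refine ⟨fun s hs => ?_, h.2.trans h'.2⟩
  obtain ⟨t, ht, hst⟩ := h.1 s hs
  obtain ⟨r, hr, htr⟩ := h'.1 t ht
  exact ⟨r, hr, hst.trans htr⟩

end Fans

section Collapse

variable {ι : Type*} {e e₁ e₂ : ι} {c d : ι →₀ ℝ≥0}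

/-- The substitution `e ↦ e₁ + e₂` on formal combinations. With `e` the ray added by a stellar
subdivision along `C(e₁, e₂)`, it carries coordinates on the subdivision to coordinates on the
original fan. -/
noncomputable def collapse (e e₁ e₂ : ι) (c : ι →₀ ℝ≥0) : ι →₀ ℝ≥0 :=
  c.erase e + c e • (Finsupp.single e₁ 1 + Finsupp.single e₂ 1)

theorem collapse_eq_self (hc : c e = 0) : collapse e e₁ e₂ c = c := by
  rw [collapse, hc, zero_smul, add_zero,
    Finsupp.erase_of_notMem_support (Finsupp.notMem_support_iff.2 hc)]

theorem collapse_apply_left (h₁ : e ≠ e₁) (h₁₂ : e₁ ≠ e₂) :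
    collapse e e₁ e₂ c e₁ = c e₁ + c e := by
  simp [collapse, h₁.symm, h₁₂]

theorem collapse_apply_right (h₂ : e ≠ e₂) (h₁₂ : e₁ ≠ e₂) :
    collapse e e₁ e₂ c e₂ = c e₂ + c e := by
  simp [collapse, h₂.symm, h₁₂.symm]

theorem collapse_apply_of_ne {x : ι} (hx : x ≠ e) (hx₁ : x ≠ e₁) (hx₂ : x ≠ e₂) :
    collapse e e₁ e₂ c x = c x := by
  simp [collapse, hx, hx₁, hx₂]

theorem support_collapse_subset [DecidableEq ι] {s : Finset ι} (hc : c.support ⊆ insert e s)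
    (h₁ : e₁ ∈ s) (h₂ : e₂ ∈ s) : (collapse e e₁ e₂ c).support ⊆ s := by
  refine Finsupp.support_add.trans (Finset.union_subset ?_ ?_)
  · rw [Finsupp.support_erase]
    exact Finset.subset_insert_iff.1 hc
  · refine Finsupp.support_smul.trans (Finsupp.support_single_add_single_subset.trans ?_)
    simp [Finset.insert_subset_iff, h₁, h₂]

-- The coefficient of `e` in `c` is the minimum of the coefficients of `e₁` and `e₂` in its image.
theorem injOn_collapse (h₁ : e ≠ e₁) (h₂ : e ≠ e₂) (h₁₂ : e₁ ≠ e₂) :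
    Set.InjOn (collapse e e₁ e₂) {c | c e₁ = 0 ∨ c e₂ = 0} := by
  have hmin (c : ι →₀ ℝ≥0) (hc : c e₁ = 0 ∨ c e₂ = 0) :
      c e = min (collapse e e₁ e₂ c e₁) (collapse e e₁ e₂ c e₂) := by
    rw [collapse_apply_left h₁ h₁₂, collapse_apply_right h₂ h₁₂]
    rcases hc with hc | hc <;> simp [hc]
  intro c hc d hd hcd
  have he : c e = d e := by rw [hmin c hc, hmin d hd, hcd]
  ext x
  have hx := DFunLike.congr_fun hcd x
  rcases eq_or_ne x e with rfl | hxe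
  · rw [he]
  rcases eq_or_ne x e₁ with rfl | hx₁
  · rw [collapse_apply_left h₁ h₁₂, collapse_apply_left h₁ h₁₂, he] at hx
    rw [add_right_cancel hx]
  rcases eq_or_ne x e₂ with rfl | hx₂
  · rw [collapse_apply_right h₂ h₁₂, collapse_apply_right h₂ h₁₂, he] at hx
    rw [add_right_cancel hx]
  rw [collapse_apply_of_ne hxe hx₁ hx₂, collapse_apply_of_ne hxe hx₁ hx₂] at hx
  rw [hx]

theorem exists_collapse_eq [DecidableEq ι] (h₁ : e ≠ e₁) (h₂ : e ≠ e₂) (h₁₂ : e₁ ≠ e₂)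
    (hd : d e = 0) :
    ∃ c, collapse e e₁ e₂ c = d ∧ c.support ⊆ insert e d.support ∧ (c e₁ = 0 ∨ c e₂ = 0) := by
  set m := min (d e₁) (d e₂) with hm
  have hle : m • (Finsupp.single e₁ 1 + Finsupp.single e₂ 1) ≤ d := by
    intro x
    rcases eq_or_ne x e₁ with rfl | hx₁
    · simp [h₁₂, hm]
    rcases eq_or_ne x e₂ with rfl | hx₂
    · simp [h₁₂.symm, hm]
    simp [hx₁, hx₂]
  obtain ⟨r, hr⟩ := exists_add_of_le hle
  have hre : r e = 0 := by simpa [hd, h₁, h₂] using (DFunLike.congr_fun hr e).symm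
  refine ⟨r + Finsupp.single e m, ?_, ?_, ?_⟩
  · simp [collapse, Finsupp.erase_add, hre, hr, add_comm r]
  · have hrd : r ≤ d := hr ▸ le_add_self
    refine Finsupp.support_add.trans (Finset.union_subset ?_ ?_)
    · exact (Finsupp.support_mono hrd).trans (Finset.subset_insert _ _)
    · exact Finsupp.support_single_subset.trans (by simp)
  · have hr₁ : d e₁ = m + r e₁ := by simpa [h₁₂] using DFunLike.congr_fun hr e₁
    have hr₂ : d e₂ = m + r e₂ := by simpa [h₁₂.symm] using DFunLike.congr_fun hr e₂
    rcases min_choice (d e₁) (d e₂) with hmin | hmin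
    · rw [hm, hmin, left_eq_add] at hr₁
      exact .inl (by simp [hr₁, h₁.symm])
    · rw [hm, hmin, left_eq_add] at hr₂
      exact .inr (by simp [hr₂, h₂.symm])

end Collapse

section Stellar

variable {n : ℕ} {Δ Δ' : Finset (Finset (Fin n → ℤ))} {e₁ e₂ : Fin n → ℤ}
  {s σ : Finset (Fin n → ℤ)}

theorem mem_stellar : σ ∈ stellar Δ e₁ e₂ ↔ (σ ∈ Δ ∧ ¬ (e₁ ∈ σ ∧ e₂ ∈ σ)) ∨
    ∃ s ∈ Δ, e₁ ∈ s ∧ e₂ ∈ s ∧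
      (σ ⊆ insert (e₁ + e₂) (s.erase e₂) ∨ σ ⊆ insert (e₁ + e₂) (s.erase e₁)) := by
  simp only [stellar, Finset.mem_union, Finset.mem_filter, Finset.mem_biUnion,
    Finset.mem_powerset, Finset.insert_subset_iff, Finset.singleton_subset_iff, and_assoc]

theorem mem_or_exists_subset_insert_of_mem_stellar (hσ : σ ∈ stellar Δ e₁ e₂) :
    σ ∈ Δ ∨ ∃ s ∈ Δ, e₁ ∈ s ∧ e₂ ∈ s ∧ σ ⊆ insert (e₁ + e₂) s := by
  rcases mem_stellar.1 hσ with ⟨hσΔ, -⟩ | ⟨s, hs, h₁, h₂, hσs | hσs⟩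
  · exact .inl hσΔ
  all_goals exact .inr ⟨s, hs, h₁, h₂,
    hσs.trans (Finset.insert_subset_insert _ (Finset.erase_subset _ _))⟩

theorem not_mem_and_mem_of_mem_stellar (h₁ : e₁ + e₂ ≠ e₁) (h₂ : e₁ + e₂ ≠ e₂)
    (hσ : σ ∈ stellar Δ e₁ e₂) : ¬ (e₁ ∈ σ ∧ e₂ ∈ σ) := by
  rcases mem_stellar.1 hσ with ⟨-, hnot⟩ | ⟨s, -, -, -, hσs | hσs⟩
  · exact hnot
  · rintro ⟨-, he₂⟩
    simpa [-right_eq_add, h₂.symm] using hσs he₂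
  · rintro ⟨he₁, -⟩
    simpa [-left_eq_add, h₁.symm] using hσs he₁

theorem isLowerSet_stellar (hΔ : IsLowerSet (Δ : Set (Finset (Fin n → ℤ)))) :
    IsLowerSet (stellar Δ e₁ e₂ : Set (Finset (Fin n → ℤ))) := by
  intro σ τ hτσ hσ
  rw [Finset.mem_coe, mem_stellar] at hσ ⊢
  rcases hσ with ⟨hσΔ, hnot⟩ | ⟨s, hs, h₁, h₂, hσs⟩
  · exact .inl ⟨hΔ hτσ hσΔ, fun h => hnot ⟨hτσ h.1, hτσ h.2⟩⟩
  · exact .inr ⟨s, hs, h₁, h₂, hσs.imp hτσ.trans hτσ.trans⟩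

theorem realize_collapse (c : (Fin n → ℤ) →₀ ℝ≥0) :
    realize (collapse (e₁ + e₂) e₁ e₂ c) = realize c := by
  conv_rhs => rw [← Finsupp.erase_add_single (e₁ + e₂) c]
  simp only [collapse, map_add, map_smul, realize_single, toR_add, one_smul]

theorem add_notMem_of_injOn_realize (hΔ : IsLowerSet (Δ : Set (Finset (Fin n → ℤ))))
    (hinj : Set.InjOn realize (coneComplex Δ)) (hne : e₁ ≠ e₂) (he : {e₁, e₂} ∈ Δ)
    (hs : s ∈ Δ) : e₁ + e₂ ∉ s := by
  intro hes
  have hsupp : (Finsupp.single e₁ 1 + Finsupp.single e₂ 1 : (Fin n → ℤ) →₀ ℝ≥0).support =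
      {e₁, e₂} := Finsupp.support_single_add_single hne one_ne_zero one_ne_zero
  have hsupp' : (Finsupp.single (e₁ + e₂) 1 : (Fin n → ℤ) →₀ ℝ≥0).support = {e₁ + e₂} :=
    Finsupp.support_single _ one_ne_zero
  have heq : (Finsupp.single (e₁ + e₂) 1 : (Fin n → ℤ) →₀ ℝ≥0) =
      Finsupp.single e₁ 1 + Finsupp.single e₂ 1 := by
    refine hinj ?_ ?_ ?_
    · rw [coneComplex, Set.mem_ofPred_eq, hsupp']
      exact hΔ (Finset.singleton_subset_iff.2 hes) hs
    · rwa [coneComplex, Set.mem_ofPred_eq, hsupp]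
    · simp only [map_add, realize_single, toR_add, one_smul]
  have hcard : ({e₁ + e₂} : Finset (Fin n → ℤ)).card = ({e₁, e₂} : Finset (Fin n → ℤ)).card := by
    rw [← hsupp, ← hsupp', heq]
  rw [Finset.card_singleton, Finset.card_pair hne] at hcard
  exact absurd hcard (by norm_num)

theorem bijOn_collapse (hΔ : IsLowerSet (Δ : Set (Finset (Fin n → ℤ)))) (hne : e₁ ≠ e₂)
    (he : {e₁, e₂} ∈ Δ) (hnew : ∀ s ∈ Δ, e₁ + e₂ ∉ s) :
    Set.BijOn (collapse (e₁ + e₂) e₁ e₂) (coneComplex (stellar Δ e₁ e₂)) (coneComplex Δ) := by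
  have h₁ : e₁ + e₂ ≠ e₁ := fun h => hnew _ he (by simp [h])
  have h₂ : e₁ + e₂ ≠ e₂ := fun h => hnew _ he (by simp [h])
  refine ⟨fun c hc => ?_, (injOn_collapse h₁ h₂ hne).mono fun c hc => ?_, fun d hd => ?_⟩
  · rcases mem_or_exists_subset_insert_of_mem_stellar hc with hcΔ | ⟨s, hs, he₁, he₂, hcs⟩
    · rwa [collapse_eq_self (Finsupp.notMem_support_iff.1 (hnew _ hcΔ))]
    · exact hΔ (support_collapse_subset hcs he₁ he₂) hs
  · simpa only [Set.mem_ofPred_eq, Finsupp.mem_support_iff, not_and_or, not_not] using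
      not_mem_and_mem_of_mem_stellar h₁ h₂ hc
  · have hde : d (e₁ + e₂) = 0 := Finsupp.notMem_support_iff.1 (hnew _ hd)
    by_cases hboth : e₁ ∈ d.support ∧ e₂ ∈ d.support
    · obtain ⟨c, hcd, hcs, hc⟩ := exists_collapse_eq h₁ h₂ hne hde
      refine ⟨c, mem_stellar.2 (.inr ⟨d.support, hd, hboth.1, hboth.2, ?_⟩), hcd⟩
      have hsub {x : Fin n → ℤ} (hx : e₁ + e₂ ≠ x) (hcx : c x = 0) :
          c.support ⊆ insert (e₁ + e₂) (d.support.erase x) := by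
        rw [← Finset.erase_insert_of_ne hx]
        exact Finset.subset_erase.2 ⟨hcs, Finsupp.notMem_support_iff.2 hcx⟩
      exact hc.symm.imp (hsub h₂) (hsub h₁)
    · exact ⟨d, mem_stellar.2 (.inl ⟨hd, hboth⟩), collapse_eq_self hde⟩

theorem injOn_realize_stellar
    (hbij : Set.BijOn (collapse (e₁ + e₂) e₁ e₂) (coneComplex (stellar Δ e₁ e₂)) (coneComplex Δ))
    (hinj : Set.InjOn realize (coneComplex Δ)) :
    Set.InjOn realize (coneComplex (stellar Δ e₁ e₂)) :=
  (hinj.comp hbij.injOn hbij.mapsTo).congr fun c _ => realize_collapse c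

theorem isSmoothFan_stellar (h : IsSmoothFan Δ) (hne : e₁ ≠ e₂) (he : {e₁, e₂} ∈ Δ) :
    IsSmoothFan (stellar Δ e₁ e₂) := by
  have hlower := isLowerSet_stellar (e₁ := e₁) (e₂ := e₂) h.isLowerSet
  have hinj := injOn_realize_stellar (bijOn_collapse h.isLowerSet hne he fun s hs =>
    add_notMem_of_injOn_realize h.isLowerSet h.injOn_realize hne he hs) h.injOn_realize
  refine isSmoothFan_of_injOn_realize hlower (fun σ hσ => ?_) hinj
  have hface {τ : Finset (Fin n → ℤ)} (hτ : τ ∈ stellar Δ e₁ e₂) (hστ : σ ⊆ τ)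
      (hτc : IsComplemented (Submodule.span ℤ (τ : Set (Fin n → ℤ)))) :
      IsComplemented (Submodule.span ℤ (σ : Set (Fin n → ℤ))) :=
    isComplemented_span_of_subset (linearIndepOn_int_of_linearIndepOn_toR
      (linearIndepOn_toR_of_injOn_realize hlower hinj hτ)) hτc (Finset.coe_subset.2 hστ)
  rcases mem_stellar.1 hσ with ⟨hσΔ, -⟩ | ⟨s, hs, h₁, h₂, hσs | hσs⟩
  · exact h.isComplemented_span hσΔ
  · refine hface (mem_stellar.2 (.inr ⟨s, hs, h₁, h₂, .inl subset_rfl⟩)) hσs ?_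
    rw [span_insert_add_erase hne h₁ h₂]
    exact h.isComplemented_span hs
  · refine hface (mem_stellar.2 (.inr ⟨s, hs, h₁, h₂, .inr subset_rfl⟩)) hσs ?_
    rw [add_comm, span_insert_add_erase hne.symm h₂ h₁]
    exact h.isComplemented_span hs

theorem exists_coneOf_subset_of_mem_stellar (hσ : σ ∈ stellar Δ e₁ e₂) :
    ∃ t ∈ Δ, coneOf σ ⊆ coneOf t := by
  rcases mem_or_exists_subset_insert_of_mem_stellar hσ with hσΔ | ⟨s, hs, h₁, h₂, hσs⟩
  · exact ⟨σ, hσΔ, subset_rfl⟩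
  · refine ⟨s, hs, coneOf_subset_coneOf fun x hx => ?_⟩
    rcases Finset.mem_insert.1 (hσs hx) with rfl | hx
    · have hx₁ := toR_mem_coneOf h₁
      have hx₂ := toR_mem_coneOf h₂
      rw [coneOf_eq_span] at hx₁ hx₂ ⊢
      rw [toR_add]
      exact Submodule.add_mem _ hx₁ hx₂
    · exact toR_mem_coneOf hx

theorem isSubdivision_stellar (h : IsSmoothFan Δ) (hne : e₁ ≠ e₂) (he : {e₁, e₂} ∈ Δ) :
    IsSubdivision (stellar Δ e₁ e₂) Δ := by
  refine ⟨fun σ hσ => exists_coneOf_subset_of_mem_stellar hσ, ?_⟩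
  have hbij := bijOn_collapse h.isLowerSet hne he fun s hs =>
    add_notMem_of_injOn_realize h.isLowerSet h.injOn_realize hne he hs
  rw [biUnion_coneOf_eq_image_realize (isLowerSet_stellar h.isLowerSet),
    biUnion_coneOf_eq_image_realize h.isLowerSet, ← hbij.image_eq, Set.image_image]
  simp only [realize_collapse]

theorem isSmoothFan_and_isSubdivision_of_reflTransGen (h : IsSmoothFan Δ)
    (hr : Relation.ReflTransGen StellarStep Δ Δ') : IsSmoothFan Δ' ∧ IsSubdivision Δ' Δ := by
  induction hr with
  | refl => exact ⟨h, .refl Δ⟩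
  | tail _ hstep ih =>
    obtain ⟨e₁, e₂, hne, he, rfl⟩ := hstep
    exact ⟨isSmoothFan_stellar ih.1 hne he, (isSubdivision_stellar ih.1 hne he).trans ih.2⟩

end Stellar

section Termination

variable {n : ℕ} {χ : Fin n → ℤ} {Δ : Finset (Finset (Fin n → ℤ))} {e₁ e₂ : Fin n → ℤ}
  {m : ℕ}

theorem pair_mem_or_of_pair_mem_stellar (hΔ : IsLowerSet (Δ : Set (Finset (Fin n → ℤ))))
    {x y : Fin n → ℤ} (hxy : x ≠ y) (h : {x, y} ∈ stellar Δ e₁ e₂) :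
    {x, y} ∈ Δ ∨ (x = e₁ + e₂ ∧ {e₁, y} ∈ Δ) ∨ (y = e₁ + e₂ ∧ {x, e₂} ∈ Δ) := by
  have hpair {s : Finset (Fin n → ℤ)} (hs : s ∈ Δ) {a b : Fin n → ℤ} (ha : a ∈ s) (hb : b ∈ s) :
      {a, b} ∈ Δ :=
    hΔ (Finset.insert_subset ha (Finset.singleton_subset_iff.2 hb)) hs
  rcases mem_or_exists_subset_insert_of_mem_stellar h with hΔxy | ⟨s, hs, h₁, h₂, hsub⟩
  · exact .inl hΔxy
  simp only [Finset.insert_subset_iff, Finset.singleton_subset_iff, Finset.mem_insert] at hsub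
  rcases hsub with ⟨hx | hx, hy | hy⟩
  · exact absurd (hx.trans hy.symm) hxy
  · exact .inr (.inl ⟨hx, hpair hs h₁ hy⟩)
  · exact .inr (.inr ⟨hy, hpair hs hx h₂⟩)
  · exact .inl (hpair hs hx hy)

open Classical in
/-- The two-dimensional cones `C(x, y)` of `Δ` on which `χ` changes sign, with
`χ(x) - χ(y) ≥ m`. This difference is what drops when such a cone is subdivided. -/
noncomputable def mixedCones (χ : Fin n → ℤ) (Δ : Finset (Finset (Fin n → ℤ))) (m : ℕ) :
    Finset (Finset (Fin n → ℤ)) :=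
  Δ.filter fun s => ∃ x y, s = {x, y} ∧ 0 < χ ⬝ᵥ x ∧ χ ⬝ᵥ y < 0 ∧ (m : ℤ) ≤ χ ⬝ᵥ x - χ ⬝ᵥ y

theorem mem_mixedCones {s : Finset (Fin n → ℤ)} : s ∈ mixedCones χ Δ m ↔
    s ∈ Δ ∧ ∃ x y, s = {x, y} ∧ 0 < χ ⬝ᵥ x ∧ χ ⬝ᵥ y < 0 ∧ (m : ℤ) ≤ χ ⬝ᵥ x - χ ⬝ᵥ y := by
  classical exact Finset.mem_filter

theorem lt_of_mixedCones_eq_empty (h : mixedCones χ Δ m = ∅) {x y : Fin n → ℤ}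
    (hxy : {x, y} ∈ Δ) (hx : 0 < χ ⬝ᵥ x) (hy : χ ⬝ᵥ y < 0) : χ ⬝ᵥ x - χ ⬝ᵥ y < m := by
  by_contra! hm
  exact Finset.eq_empty_iff_forall_notMem.1 h _ (mem_mixedCones.2 ⟨hxy, x, y, rfl, hx, hy, hm⟩)

theorem mixedCones_succ_subset : mixedCones χ Δ (m + 1) ⊆ mixedCones χ Δ m := by
  intro s hs
  obtain ⟨hsΔ, x, y, hsxy, hx, hy, hm⟩ := mem_mixedCones.1 hs
  exact mem_mixedCones.2 ⟨hsΔ, x, y, hsxy, hx, hy, by omega⟩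

theorem exists_mixedCones_eq_empty (χ : Fin n → ℤ) (Δ : Finset (Finset (Fin n → ℤ))) :
    ∃ m, mixedCones χ Δ m = ∅ := by
  obtain ⟨M, hM⟩ := ((Δ.biUnion id).image fun x => (χ ⬝ᵥ x).natAbs).exists_le
  have hbound {s : Finset (Fin n → ℤ)} (hs : s ∈ Δ) {x : Fin n → ℤ} (hx : x ∈ s) :
      (χ ⬝ᵥ x).natAbs ≤ M :=
    hM _ (Finset.mem_image_of_mem _ (Finset.mem_biUnion.2 ⟨s, hs, hx⟩))
  refine ⟨2 * M + 1, Finset.eq_empty_iff_forall_notMem.2 fun s hs => ?_⟩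
  obtain ⟨hsΔ, x, y, rfl, -, -, hm⟩ := mem_mixedCones.1 hs
  have hx := hbound hsΔ (x := x) (by simp)
  have hy := hbound hsΔ (x := y) (by simp)
  omega

-- A new cone on which `χ` changes sign is `C(e₁ + e₂, y)` or `C(x, e₁ + e₂)`. It inherits from
-- `C(e₁, y)` or `C(x, e₂)` a smaller difference of values of `χ`, hence one below `m`.
theorem mixedCones_stellar_subset (hΔ : IsLowerSet (Δ : Set (Finset (Fin n → ℤ))))
    (hm : mixedCones χ Δ (m + 1) = ∅) (h₁ : 0 < χ ⬝ᵥ e₁) (h₂ : χ ⬝ᵥ e₂ < 0) :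
    mixedCones χ (stellar Δ e₁ e₂) m ⊆ mixedCones χ Δ m := by
  intro s hs
  obtain ⟨hsΔ, x, y, rfl, hx, hy, hxy⟩ := mem_mixedCones.1 hs
  have hne : x ≠ y := by
    rintro rfl
    exact lt_asymm hx hy
  rcases pair_mem_or_of_pair_mem_stellar hΔ hne hsΔ with hmem | ⟨rfl, hmem⟩ | ⟨rfl, hmem⟩
  · exact mem_mixedCones.2 ⟨hmem, x, y, rfl, hx, hy, hxy⟩
  · have hlt := lt_of_mixedCones_eq_empty hm hmem h₁ hy
    rw [dotProduct_add] at hxy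
    omega
  · have hlt := lt_of_mixedCones_eq_empty hm hmem hx h₂
    rw [dotProduct_add] at hxy
    omega

theorem pair_notMem_stellar (h : IsSmoothFan Δ) (hne : e₁ ≠ e₂) (he : {e₁, e₂} ∈ Δ) :
    {e₁, e₂} ∉ stellar Δ e₁ e₂ := by
  have hnew : e₁ + e₂ ∉ ({e₁, e₂} : Finset (Fin n → ℤ)) :=
    add_notMem_of_injOn_realize h.isLowerSet h.injOn_realize hne he he
  rw [Finset.mem_insert, Finset.mem_singleton, not_or] at hnew
  exact fun hmem => not_mem_and_mem_of_mem_stellar hnew.1 hnew.2 hmem (by simp)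

theorem exists_reflTransGen_mixedCones_eq_empty_of_succ (h : IsSmoothFan Δ)
    (hm : mixedCones χ Δ (m + 1) = ∅) :
    ∃ Δ', Relation.ReflTransGen StellarStep Δ Δ' ∧ mixedCones χ Δ' m = ∅ := by
  induction hk : (mixedCones χ Δ m).card using Nat.strong_induction_on generalizing Δ with
  | _ k ih =>
    rcases (mixedCones χ Δ m).eq_empty_or_nonempty with hempty | ⟨s, hs⟩
    · exact ⟨Δ, .refl, hempty⟩
    obtain ⟨he, e₁, e₂, rfl, h₁, h₂, -⟩ := mem_mixedCones.1 hs
    have hne : e₁ ≠ e₂ := by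
      rintro rfl
      exact lt_asymm h₁ h₂
    have hssub : mixedCones χ (stellar Δ e₁ e₂) m ⊂ mixedCones χ Δ m :=
      Finset.ssubset_iff_subset_ne.2 ⟨mixedCones_stellar_subset h.isLowerSet hm h₁ h₂, fun heq =>
        pair_notMem_stellar h hne he (mem_mixedCones.1 (heq ▸ hs)).1⟩
    have hm' : mixedCones χ (stellar Δ e₁ e₂) (m + 1) = ∅ := by
      have hsucc : mixedCones χ Δ (m + 1 + 1) = ∅ :=
        Finset.subset_empty.1 (hm ▸ mixedCones_succ_subset)
      exact Finset.subset_empty.1 (hm ▸ mixedCones_stellar_subset h.isLowerSet hsucc h₁ h₂)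
    obtain ⟨Δ', hr, hΔ'⟩ := ih _ (hk ▸ Finset.card_lt_card hssub)
      (isSmoothFan_stellar h hne he) hm' rfl
    exact ⟨Δ', hr.head ⟨e₁, e₂, hne, he, rfl⟩, hΔ'⟩

theorem exists_reflTransGen_mixedCones_zero_eq_empty (χ : Fin n → ℤ) (h : IsSmoothFan Δ) :
    ∃ Δ', Relation.ReflTransGen StellarStep Δ Δ' ∧ mixedCones χ Δ' 0 = ∅ := by
  obtain ⟨m, hm⟩ := exists_mixedCones_eq_empty χ Δ
  induction m generalizing Δ with
  | zero => exact ⟨Δ, .refl, hm⟩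
  | succ m ih =>
    obtain ⟨Δ₁, hr₁, hΔ₁⟩ := exists_reflTransGen_mixedCones_eq_empty_of_succ h hm
    obtain ⟨Δ₂, hr₂, hΔ₂⟩ := ih (isSmoothFan_and_isSubdivision_of_reflTransGen h hr₁).1 hΔ₁
    exact ⟨Δ₂, hr₁.trans hr₂, hΔ₂⟩

end Termination

section PropertyE

variable {n : ℕ} {χ : Fin n → ℤ} {Δ : Finset (Finset (Fin n → ℤ))} {s t : Finset (Fin n → ℤ)}

/-- Property (E) of `χ` with respect to the cone spanned by `s`: `χ` does not take both positive
and negative values on it. The sum is the pairing `⟨χ, v⟩`. -/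
def HasPropertyE (χ : Fin n → ℤ) (s : Finset (Fin n → ℤ)) : Prop :=
  (∀ v ∈ coneOf s, 0 ≤ ∑ k, (χ k : ℝ) * v k) ∨ (∀ v ∈ coneOf s, ∑ k, (χ k : ℝ) * v k ≤ 0)

theorem HasPropertyE.mono (h : HasPropertyE χ t) (hst : coneOf s ⊆ coneOf t) :
    HasPropertyE χ s :=
  h.imp (fun h v hv => h v (hst hv)) fun h v hv => h v (hst hv)

theorem hasPropertyE_of_mixedCones_eq_empty (hΔ : IsLowerSet (Δ : Set (Finset (Fin n → ℤ))))
    (h : mixedCones χ Δ 0 = ∅) (hs : s ∈ Δ) : HasPropertyE χ s := by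
  by_cases hpos : ∃ x ∈ s, 0 < χ ⬝ᵥ x
  · obtain ⟨x, hxs, hx⟩ := hpos
    refine .inl fun v hv => dotProduct_nonneg_of_mem_coneOf (w := toR χ) (fun y hys => ?_) hv
    rw [toR_dotProduct_toR, Int.cast_nonneg_iff]
    by_contra! hy
    have hxy : {x, y} ∈ Δ :=
      hΔ (Finset.insert_subset hxs (Finset.singleton_subset_iff.2 hys)) hs
    have hlt := lt_of_mixedCones_eq_empty h hxy hx hy
    omega
  · push Not at hpos
    refine .inr fun v hv => dotProduct_nonpos_of_mem_coneOf (w := toR χ) (fun y hys => ?_) hv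
    rw [toR_dotProduct_toR, Int.cast_nonpos]
    exact hpos y hys

theorem exists_reflTransGen_hasPropertyE (h : IsSmoothFan Δ) (Ξ : Finset (Fin n → ℤ)) :
    ∃ Δ', Relation.ReflTransGen StellarStep Δ Δ' ∧ ∀ χ ∈ Ξ, ∀ s ∈ Δ', HasPropertyE χ s := by
  induction Ξ using Finset.induction_on with
  | empty => exact ⟨Δ, .refl, by simp⟩
  | insert χ Ξ _ ih =>
    obtain ⟨Δ₁, hr₁, hE₁⟩ := ih
    have hΔ₁ := (isSmoothFan_and_isSubdivision_of_reflTransGen h hr₁).1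
    obtain ⟨Δ₂, hr₂, hmixed⟩ := exists_reflTransGen_mixedCones_zero_eq_empty χ hΔ₁
    obtain ⟨hΔ₂, hsub⟩ := isSmoothFan_and_isSubdivision_of_reflTransGen hΔ₁ hr₂
    refine ⟨Δ₂, hr₁.trans hr₂, fun ψ hψ s hs => ?_⟩
    rcases Finset.mem_insert.1 hψ with rfl | hψ
    · exact hasPropertyE_of_mixedCones_eq_empty hΔ₂.isLowerSet hmixed hs
    · obtain ⟨t, ht, hst⟩ := hsub.1 s hs
      exact (hE₁ ψ hψ t ht).mono hst

end PropertyE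

/-- Theorem 4.4: given a smooth fan `Δ` in `ℝ^n` and a finite set `Ξ ⊂ Hom(ℤ^n, ℤ)`, there is
a fan `Δ'` obtained from `Δ` by finitely many elementary stellar subdivisions of two
dimensional cones such that `Δ'` is smooth, subdivides `Δ` (same support, every cone of `Δ'`
inside a cone of `Δ`) and every `χ ∈ Ξ` has property (E) with respect to every cone of `Δ'`:
on each cone of `Δ'`, `χ` is everywhere nonnegative or everywhere nonpositive. -/
theorem stmt10 {n : ℕ} (Δ : Finset (Finset (Fin n → ℤ))) (hΔ : IsSmoothFan Δ)
    (Ξ : Finset (Fin n → ℤ)) :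
    ∃ Δ' : Finset (Finset (Fin n → ℤ)),
      Relation.ReflTransGen StellarStep Δ Δ' ∧
      IsSmoothFan Δ' ∧
      (∀ s ∈ Δ', ∃ t ∈ Δ, coneOf s ⊆ coneOf t) ∧
      ((⋃ s ∈ Δ', coneOf s) = ⋃ s ∈ Δ, coneOf s) ∧
      (∀ χ ∈ Ξ, ∀ s ∈ Δ',
        (∀ v ∈ coneOf s, 0 ≤ ∑ k, (χ k : ℝ) * v k) ∨
        (∀ v ∈ coneOf s, ∑ k, (χ k : ℝ) * v k ≤ 0)) := by
  obtain ⟨Δ', hr, hE⟩ := exists_reflTransGen_hasPropertyE hΔ Ξ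
  obtain ⟨hsmooth, hrefine, hunion⟩ := isSmoothFan_and_isSubdivision_of_reflTransGen hΔ hr
  exact ⟨Δ', hr, hsmooth, hrefine, hunion, hE⟩
end
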